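/- Let ρ be an arbitrary metric on the space sG of s-graphons compatible with the weak topology, and let d_H^ρ be the induced Hausdorff distance on the hyperspace of compact subsets of sG. Then for every ε > 0 there exists K ∈ ℕ such that for EVERY s-graphon ν, d_H^ρ( C(ν), C̃(ν,K) ) ≤ ε. -/

import Mathlib

open MeasureTheory Topology Filter

noncomputable section

/-- The unit square `[0,1]²`. -/
abbrev Sq : Type := unitInterval × unitInterval

/-- Convergence of a sequence of subsets in the Vietoris topology
(upper + lower Vietoris convergence). -/
def VietorisTendsto {X : Type*} [TopologicalSpace X] (A : ℕ → Set X) (B : Set X) : Prop :=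
  (∀ U : Set X, IsOpen U → B ⊆ U → ∀ᶠ n in atTop, A n ⊆ U) ∧
  (∀ U : Set X, IsOpen U → (B ∩ U).Nonempty → ∀ᶠ n in atTop, (A n ∩ U).Nonempty)

/-- A measure on the unit square is symmetric if it is invariant under the coordinate swap. -/
def IsSymmSq (μ : Measure Sq) : Prop := μ.map Prod.swap = μ

/-- s-graphons: symmetric Borel probability measures on the unit square,
with the weak topology. -/
def SGraphon : Type := {μ : ProbabilityMeasure Sq // IsSymmSq (μ : Measure Sq)}

instance : TopologicalSpace SGraphon :=
  inferInstanceAs (TopologicalSpace {μ : ProbabilityMeasure Sq // IsSymmSq (μ : Measure Sq)})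

/-- The underlying measure of an s-graphon. -/
def SGraphon.toMeasure (μ : SGraphon) : Measure Sq := (μ.1 : Measure Sq)

/-- A non-negative bounded Borel function on the unit square is fairly distributed
if all its horizontal and vertical sections integrate (w.r.t. Lebesgue measure) to 1. -/
structure FairlyDistributed (f : Sq → ℝ) : Prop where
  measurable : Measurable f
  nonneg : ∀ p, 0 ≤ f p
  bounded : ∃ C : ℝ, ∀ p, f p ≤ C
  row : ∀ x : unitInterval, ∫ v, f (x, v) = 1
  col : ∀ y : unitInterval, ∫ u, f (u, y) = 1

/-- The density `φ(f,μ)`. -/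
def phiFn (f : Sq → ℝ) (μ : Measure Sq) (p : Sq) : ℝ :=
  ∫ q, f (q.1, p.1) * f (q.2, p.2) ∂μ

/-- The measure `Φ(f,μ)`, with density `φ(f,μ)` w.r.t. 2-dimensional Lebesgue measure. -/
def PhiMeas (f : Sq → ℝ) (μ : Measure Sq) : Measure Sq :=
  volume.withDensity fun p => ENNReal.ofReal (phiFn f μ p)

/-- The shape of a measure `μ` on the unit square: the weak closure of the set of
(s-graphons corresponding to) the measures `Φ(f,μ)`, `f` continuous fairly distributed. -/
def shapeM (μ : Measure Sq) : Set SGraphon :=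
  closure {ν : SGraphon | ∃ f : Sq → ℝ, FairlyDistributed f ∧ Continuous f ∧
    ν.toMeasure = PhiMeas f μ}

/-- The shape `C(μ)` of an s-graphon. -/
def shape (μ : SGraphon) : Set SGraphon := shapeM μ.toMeasure

/-- A fractional partition into `k` parts: non-negative Borel functions on `[0,1]`
summing to the constant function 1, each integrating to `1/k`. -/
def IsFracPartition (k : ℕ) (f : Fin k → unitInterval → ℝ) : Prop :=
  (∀ i, Measurable (f i)) ∧ (∀ i x, 0 ≤ f i x) ∧ (∀ x, ∑ i, f i x = 1) ∧
    ∀ i, ∫ x, f i x = 1 / k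

/-- The `k`-shape `C(μ,k)`: the closure in `ℝ^{k×k}` of the set of density matrices of
fractional partitions into `k` parts. -/
def kShape (μ : Measure Sq) (k : ℕ) : Set (Matrix (Fin k) (Fin k) ℝ) :=
  closure {M | ∃ f : Fin k → unitInterval → ℝ, IsFracPartition k f ∧
    ∀ i j, M i j = ∫ p, f i p.1 * f j p.2 ∂μ}

/-- `M_k^*`: symmetric `k×k` matrices with non-negative entries summing to 1. -/
def Mstar (k : ℕ) : Set (Matrix (Fin k) (Fin k) ℝ) :=
  {M | M.IsSymm ∧ (∀ i j, 0 ≤ M i j) ∧ ∑ i, ∑ j, M i j = 1}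

/-- The index `i` (0-based) with `u ∈ [i/k, (i+1)/k)` (and `i = k-1` for `u = 1`). -/
def gridIdx (k : ℕ) (hk : 0 < k) (u : unitInterval) : Fin k :=
  ⟨min ⌊(u : ℝ) * k⌋₊ (k - 1), lt_of_le_of_lt (min_le_right _ _) (Nat.sub_lt hk one_pos)⟩

/-- The measure `μ_M` associated to a `k×k` matrix `M`: its density w.r.t. 2-dimensional
Lebesgue measure equals `k² M(i,j)` on the square `[i/k,(i+1)/k) × [j/k,(j+1)/k)` (0-based). -/
def muM {k : ℕ} (M : Matrix (Fin k) (Fin k) ℝ) : Measure Sq :=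
  if hk : 0 < k then
    volume.withDensity fun p =>
      ENNReal.ofReal ((k : ℝ) ^ 2 * M (gridIdx k hk p.1) (gridIdx k hk p.2))
  else 0

/-- `C̃(μ,k)`: the `k`-shape of `μ`, interpreted as a set of s-graphons. -/
def kShapeTilde (μ : Measure Sq) (k : ℕ) : Set SGraphon :=
  {ν : SGraphon | ∃ M ∈ kShape μ k, ν.toMeasure = muM M}

/-- The interval `I_i = [i/k, (i+1)/k)` (0-based), with `I_{k-1} = [(k-1)/k, 1]`,
as a subset of `[0,1]`. -/
def Ik (k : ℕ) (i : Fin k) : Set unitInterval :=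
  if (i : ℕ) + 1 = k then Subtype.val ⁻¹' Set.Icc (((i : ℕ) : ℝ) / k) 1
  else Subtype.val ⁻¹' Set.Ico (((i : ℕ) : ℝ) / k) ((((i : ℕ) : ℝ) + 1) / k)

/-! ### The grid -/

lemma gridIdx_lower (k : ℕ) (hk : 0 < k) (u : unitInterval) :
    ((gridIdx k hk u : ℕ) : ℝ) / k ≤ u := by
  have hk' : (0:ℝ) < k := by exact_mod_cast hk
  rw [div_le_iff₀ hk']
  have h1 : (gridIdx k hk u : ℕ) ≤ ⌊(u : ℝ) * k⌋₊ := min_le_left _ _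
  have h2 : ((⌊(u : ℝ) * k⌋₊ : ℕ) : ℝ) ≤ (u : ℝ) * k :=
    Nat.floor_le (mul_nonneg u.2.1 hk'.le)
  have h3 : ((gridIdx k hk u : ℕ) : ℝ) ≤ (⌊(u : ℝ) * k⌋₊ : ℕ) := by exact_mod_cast h1
  linarith

lemma gridIdx_upper (k : ℕ) (hk : 0 < k) (u : unitInterval) :
    (u : ℝ) ≤ (((gridIdx k hk u : ℕ) : ℝ) + 1) / k := by
  have hk' : (0:ℝ) < k := by exact_mod_cast hk
  rw [le_div_iff₀ hk']
  have hval : (gridIdx k hk u : ℕ) = min ⌊(u : ℝ) * k⌋₊ (k - 1) := rfl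
  rcases le_total ⌊(u : ℝ) * k⌋₊ (k - 1) with h | h
  · rw [hval, min_eq_left h]
    exact (Nat.lt_floor_add_one _).le
  · rw [hval, min_eq_right h, Nat.cast_sub (by omega)]
    have := u.2.2
    push_cast
    nlinarith

lemma gridIdx_eq_of_mem (k : ℕ) (hk : 0 < k) (i : Fin k) (u : unitInterval)
    (h1 : ((i : ℕ) : ℝ) / k ≤ u) (h2 : (u : ℝ) < (((i : ℕ) : ℝ) + 1) / k) :
    gridIdx k hk u = i := by
  have hk' : (0:ℝ) < k := by exact_mod_cast hk
  rw [div_le_iff₀ hk'] at h1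
  rw [lt_div_iff₀ hk'] at h2
  have hf : ⌊(u : ℝ) * k⌋₊ = (i : ℕ) := by
    rw [Nat.floor_eq_iff (mul_nonneg u.2.1 hk'.le)]
    exact ⟨h1, h2⟩
  apply Fin.ext
  have hval : (gridIdx k hk u : ℕ) = min ⌊(u : ℝ) * k⌋₊ (k - 1) := rfl
  rw [hval, hf]
  have := i.2
  omega

lemma measurable_gridIdx (k : ℕ) (hk : 0 < k) : Measurable (gridIdx k hk) := by
  have h : Measurable fun u : unitInterval => min ⌊(u : ℝ) * k⌋₊ (k - 1) := by
    have : Measurable fun u : unitInterval => ⌊(u : ℝ) * k⌋₊ :=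
      Nat.measurable_floor.comp (by fun_prop)
    exact this.min measurable_const
  refine measurable_to_countable' fun i => ?_
  have : gridIdx k hk ⁻¹' {i} =
      (fun u : unitInterval => min ⌊(u : ℝ) * k⌋₊ (k - 1)) ⁻¹' {(i : ℕ)} := by
    ext u
    simp only [Set.mem_preimage, Set.mem_singleton_iff, Fin.ext_iff]
    rfl
  rw [this]
  exact h (measurableSet_singleton _)

/-- One-dimensional grid cell. -/
def gcell (k : ℕ) (hk : 0 < k) (i : Fin k) : Set unitInterval := gridIdx k hk ⁻¹' {i}

lemma measurableSet_gcell (k : ℕ) (hk : 0 < k) (i : Fin k) : MeasurableSet (gcell k hk i) :=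
  measurable_gridIdx k hk (measurableSet_singleton _)

lemma volume_gcell (k : ℕ) (hk : 0 < k) (i : Fin k) :
    (volume : Measure unitInterval) (gcell k hk i) = ENNReal.ofReal (1 / k) := by
  have hk' : (0:ℝ) < k := by exact_mod_cast hk
  have hi : ((i : ℕ) : ℝ) + 1 ≤ k := by exact_mod_cast i.2
  have hi0 : (0:ℝ) ≤ ((i : ℕ) : ℝ) := Nat.cast_nonneg _
  have ha : ((i : ℕ) : ℝ) / k ∈ unitInterval :=
    ⟨by positivity, by rw [div_le_one hk']; linarith⟩
  have hb : (((i : ℕ) : ℝ) + 1) / k ∈ unitInterval :=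
    ⟨by positivity, by rw [div_le_one hk']; linarith⟩
  have hd : (((i : ℕ) : ℝ) + 1) / k - ((i : ℕ) : ℝ) / k = 1 / k := by ring
  apply le_antisymm
  · have hs : gcell k hk i ⊆ Set.Icc ⟨_, ha⟩ ⟨_, hb⟩ := by
      intro u hu
      have hu' : gridIdx k hk u = i := hu
      constructor
      · have := gridIdx_lower k hk u
        rw [hu'] at this
        exact this
      · have := gridIdx_upper k hk u
        rw [hu'] at this
        exact this
    refine (measure_mono hs).trans ?_
    rw [unitInterval.volume_Icc]
    simp only [hd]
    exact le_rfl
  · have hs : Set.Ico (⟨_, ha⟩ : unitInterval) ⟨_, hb⟩ ⊆ gcell k hk i := by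
      intro u hu
      exact gridIdx_eq_of_mem k hk i u hu.1 hu.2
    refine le_trans ?_ (measure_mono hs)
    rw [unitInterval.volume_Ico]
    simp only [hd]
    exact le_rfl

lemma volume_real_gcell (k : ℕ) (hk : 0 < k) (i : Fin k) :
    (volume : Measure unitInterval).real (gcell k hk i) = 1 / k := by
  rw [measureReal_def, volume_gcell, ENNReal.toReal_ofReal (by positivity)]

/-- The lower-left corner of a cell. -/
def gcorner (k : ℕ) (hk : 0 < k) (i : Fin k) : unitInterval :=
  ⟨((i : ℕ) : ℝ) / k, by
    have hk' : (0:ℝ) < k := by exact_mod_cast hk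
    have hi : ((i : ℕ) : ℝ) + 1 ≤ k := by exact_mod_cast i.2
    exact ⟨by positivity, by rw [div_le_one hk']; linarith⟩⟩

lemma dist_gcorner (k : ℕ) (hk : 0 < k) (u : unitInterval) :
    dist u (gcorner k hk (gridIdx k hk u)) ≤ 1 / k := by
  rw [Subtype.dist_eq, Real.dist_eq, abs_le]
  have h1 := gridIdx_lower k hk u
  have h2 := gridIdx_upper k hk u
  have h3 : (0:ℝ) ≤ 1 / k := by positivity
  rw [add_div] at h2
  simp only [gcorner]
  constructor <;> linarith

/-- Map to grid indices. -/
def gmap (k : ℕ) (hk : 0 < k) (p : Sq) : Fin k × Fin k := (gridIdx k hk p.1, gridIdx k hk p.2)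

lemma measurable_gmap (k : ℕ) (hk : 0 < k) : Measurable (gmap k hk) :=
  ((measurable_gridIdx k hk).comp measurable_fst).prodMk
    ((measurable_gridIdx k hk).comp measurable_snd)

lemma integral_gmap (k : ℕ) (hk : 0 < k) (σ : Measure Sq) [IsFiniteMeasure σ]
    (F : Fin k × Fin k → ℝ) :
    ∫ p, F (gmap k hk p) ∂σ = ∑ c, σ.real (gcell k hk c.1 ×ˢ gcell k hk c.2) * F c := by
  have hm : AEMeasurable (gmap k hk) σ := (measurable_gmap k hk).aemeasurable
  rw [← integral_map (μ := σ) hm (f := F) (measurable_of_finite F).aestronglyMeasurable]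
  have : IsFiniteMeasure (σ.map (gmap k hk)) := inferInstance
  rw [integral_fintype (Integrable.of_finite)]
  refine Finset.sum_congr rfl fun c _ => ?_
  rw [map_measureReal_apply (measurable_gmap k hk) (measurableSet_singleton _), smul_eq_mul]
  congr 2
  ext p
  simp [gmap, gcell, Prod.ext_iff]

lemma grid_compare (k : ℕ) (hk : 0 < k) (σ τ : Measure Sq) [IsProbabilityMeasure σ]
    [IsProbabilityMeasure τ]
    (hc : ∀ i j, |σ.real (gcell k hk i ×ˢ gcell k hk j) - τ.real (gcell k hk i ×ˢ gcell k hk j)|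
      ≤ 1 / (k : ℝ) ^ 3)
    (g : BoundedContinuousFunction Sq ℝ) (w : ℝ)
    (hw : ∀ p q, dist p q ≤ 1 / (k : ℝ) → |g p - g q| ≤ w) :
    |∫ p, g p ∂σ - ∫ p, g p ∂τ| ≤ 2 * w + ‖g‖ / k := by
  have hk' : (0:ℝ) < k := by exact_mod_cast hk
  set F : Fin k × Fin k → ℝ := fun c => g (gcorner k hk c.1, gcorner k hk c.2) with hF
  have hFm : Measurable fun p => F (gmap k hk p) :=
    (measurable_of_finite F).comp (measurable_gmap k hk)
  have key : ∀ (μ : Measure Sq) [IsProbabilityMeasure μ],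
      |∫ p, g p ∂μ - ∫ p, F (gmap k hk p) ∂μ| ≤ w := by
    intro μ _
    have hFi : Integrable (fun p => F (gmap k hk p)) μ :=
      Integrable.of_bound hFm.aestronglyMeasurable ‖g‖
        (Eventually.of_forall fun p => g.norm_coe_le_norm _)
    rw [← integral_sub (g.integrable μ) hFi]
    have := norm_integral_le_of_norm_le_const (μ := μ)
      (f := fun p => g p - F (gmap k hk p)) (C := w)
      (Eventually.of_forall fun p => by
        rw [Real.norm_eq_abs]
        apply hw
        rw [Prod.dist_eq]
        exact max_le (dist_gcorner k hk p.1) (dist_gcorner k hk p.2))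
    simpa using this
  have h3 : |∫ p, F (gmap k hk p) ∂σ - ∫ p, F (gmap k hk p) ∂τ| ≤ ‖g‖ / k := by
    rw [integral_gmap, integral_gmap, ← Finset.sum_sub_distrib]
    refine (Finset.abs_sum_le_sum_abs _ _).trans ?_
    have : ∀ c ∈ (Finset.univ : Finset (Fin k × Fin k)),
        |σ.real (gcell k hk c.1 ×ˢ gcell k hk c.2) * F c
          - τ.real (gcell k hk c.1 ×ˢ gcell k hk c.2) * F c| ≤ 1 / (k:ℝ)^3 * ‖g‖ := by
      intro c _
      rw [← sub_mul, abs_mul]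
      exact mul_le_mul (hc _ _) (g.norm_coe_le_norm _) (abs_nonneg _) (by positivity)
    refine (Finset.sum_le_card_nsmul _ _ _ this).trans ?_
    simp only [Finset.card_univ, Fintype.card_prod, Fintype.card_fin, nsmul_eq_mul]
    push_cast
    apply le_of_eq
    field_simp
  have h1 := key σ
  have h2 := key τ
  rw [abs_le] at *
  constructor <;> linarith [h1.1, h1.2, h2.1, h2.2, h3.1, h3.2]

/-! ### Compactness of the space of s-graphons -/

instance (μ : SGraphon) : IsProbabilityMeasure μ.toMeasure :=
  inferInstanceAs (IsProbabilityMeasure (μ.1 : Measure Sq))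

lemma sgraphon_ext {μ ν : SGraphon} (h : μ.toMeasure = ν.toMeasure) : μ = ν :=
  Subtype.ext (Subtype.ext h)

instance : CompactSpace SGraphon := by
  have hcl : IsClosed {μ : ProbabilityMeasure Sq | IsSymmSq (μ : Measure Sq)} := by
    have : {μ : ProbabilityMeasure Sq | IsSymmSq (μ : Measure Sq)} =
        {μ : ProbabilityMeasure Sq |
          μ.map (continuous_swap (X := unitInterval) (Y := unitInterval)).measurable.aemeasurable
            = μ} := by
      ext μ
      simp only [Set.mem_ofPred_eq, IsSymmSq]
      constructor
      · intro h
        exact Subtype.ext h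
      · intro h
        exact congrArg Subtype.val h
    rw [this]
    exact isClosed_eq (ProbabilityMeasure.continuous_map continuous_swap) continuous_id
  exact isCompact_iff_compactSpace.mp hcl.isCompact

lemma tendsto_integral_sgraphon {σ : ℕ → SGraphon} {a : SGraphon}
    (h : Tendsto σ atTop (𝓝 a)) (g : BoundedContinuousFunction Sq ℝ) :
    Tendsto (fun n => ∫ p, g p ∂(σ n).toMeasure) atTop (𝓝 (∫ p, g p ∂a.toMeasure)) := by
  have h' : Tendsto (fun n => (σ n).1) atTop (𝓝 a.1) := (continuous_subtype_val.tendsto a).comp h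
  exact ProbabilityMeasure.tendsto_iff_forall_integral_tendsto.mp h' g

lemma exists_grid (m : MetricSpace SGraphon)
    (hcompat : m.toUniformSpace.toTopologicalSpace =
      (inferInstance : TopologicalSpace SGraphon)) (ε : ℝ) (hε : 0 < ε) :
    ∃ k : ℕ, ∃ hk : 0 < k, ∀ σ τ : SGraphon,
      (∀ i j, |σ.toMeasure.real (gcell k hk i ×ˢ gcell k hk j)
        - τ.toMeasure.real (gcell k hk i ×ˢ gcell k hk j)| ≤ 1 / (k : ℝ) ^ 3) →
      dist σ τ ≤ ε := by
  by_contra! hcon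
  choose σ τ hc hd using fun n : ℕ => hcon (n + 1) n.succ_pos
  have hfc : FirstCountableTopology SGraphon := by
    have h : @FirstCountableTopology SGraphon m.toUniformSpace.toTopologicalSpace :=
      @UniformSpace.firstCountableTopology SGraphon m.toUniformSpace _
    rw [hcompat] at h
    exact h
  have hcomp : IsCompact (Set.univ : Set SGraphon) := isCompact_univ
  obtain ⟨a, -, φ, hφ, ha⟩ := hcomp.tendsto_subseq (x := σ) (fun _ => Set.mem_univ _)
  obtain ⟨b, -, ψ, hψ, hb⟩ := hcomp.tendsto_subseq (x := τ ∘ φ) (fun _ => Set.mem_univ _)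
  have ha' := ha.comp hψ.tendsto_atTop
  have hdist : ε ≤ dist a b := by
    have ha2 : Tendsto ((σ ∘ φ) ∘ ψ) atTop
        (@nhds SGraphon m.toUniformSpace.toTopologicalSpace a) := by
      rw [hcompat]
      exact ha'
    have hb2 : Tendsto ((τ ∘ φ) ∘ ψ) atTop
        (@nhds SGraphon m.toUniformSpace.toTopologicalSpace b) := by
      rw [hcompat]
      exact hb
    refine ge_of_tendsto (ha2.dist hb2) (Eventually.of_forall fun n => (hd _).le)
  have hab : a = b := by
    apply sgraphon_ext
    apply ext_of_forall_integral_eq_of_IsFiniteMeasure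
    intro g
    have h1 := tendsto_integral_sgraphon ha' g
    have h2 := tendsto_integral_sgraphon hb g
    have h3 : Tendsto (fun n => ∫ p, g p ∂(((σ ∘ φ) ∘ ψ) n).toMeasure
        - ∫ p, g p ∂(((τ ∘ φ) ∘ ψ) n).toMeasure) atTop (𝓝 0) := by
      rw [Metric.tendsto_atTop]
      intro e he
      have huc : UniformContinuous g :=
        CompactSpace.uniformContinuous_of_continuous g.continuous
      obtain ⟨d, hd0, hdd⟩ := Metric.uniformContinuous_iff.mp huc (e / 4) (by positivity)
      obtain ⟨N, hN⟩ := exists_nat_gt (max (1 / d) (4 * ‖g‖ / e))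
      refine ⟨N, fun n hn => ?_⟩
      set r := φ (ψ n) with hr
      have hrn : N ≤ r := hn.trans ((hψ.id_le n).trans (hφ.id_le (ψ n)))
      have hrn' : (N : ℝ) ≤ r := by exact_mod_cast hrn
      have hr0 : (0 : ℝ) < ((r + 1 : ℕ) : ℝ) := by positivity
      have hb1 : 1 / ((r + 1 : ℕ) : ℝ) < d := by
        rw [div_lt_iff₀ hr0]
        have := (le_max_left (1 / d) (4 * ‖g‖ / e)).trans_lt hN
        rw [div_lt_iff₀ hd0] at this
        push_cast
        nlinarith
      have hb2 : ‖g‖ / ((r + 1 : ℕ) : ℝ) < e / 4 := by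
        rw [div_lt_iff₀ hr0]
        have := (le_max_right (1 / d) (4 * ‖g‖ / e)).trans_lt hN
        rw [div_lt_iff₀ he] at this
        push_cast
        nlinarith
      have := grid_compare (r + 1) r.succ_pos (σ r).toMeasure (τ r).toMeasure (hc r) g (e / 4)
        (fun p q hpq => by
          have := hdd (hpq.trans_lt hb1)
          rw [Real.dist_eq] at this
          exact this.le)
      rw [Real.dist_eq, sub_zero]
      refine lt_of_le_of_lt this ?_
      linarith
    have h4 := tendsto_nhds_unique h3 (h1.sub h2)
    linarith
  rw [hab, dist_self] at hdist
  linarith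

/-! ### The measures `Φ(f,ν)` and `μ_M` -/

lemma isSymmSq_withDensity (d : Sq → ENNReal) (hd : ∀ p, d p.swap = d p) :
    IsSymmSq (volume.withDensity d) := by
  have hmp : MeasurePreserving (Prod.swap : Sq → Sq) volume volume :=
    Measure.measurePreserving_swap
  have hme : MeasurableEmbedding (Prod.swap : Sq → Sq) :=
    MeasurableEquiv.prodComm.measurableEmbedding
  unfold IsSymmSq
  ext s hs
  rw [Measure.map_apply measurable_swap hs, withDensity_apply _ (measurable_swap hs),
    withDensity_apply _ hs, ← hmp.setLIntegral_comp_preimage_emb hme d s]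
  simp only [hd]

lemma phiFn_integrable_aux {f : Sq → ℝ} (hf : FairlyDistributed f) (ν : Measure Sq)
    [IsProbabilityMeasure ν] (μ : Measure Sq) [IsFiniteMeasure μ] :
    Integrable (Function.uncurry fun (p q : Sq) => f (q.1, p.1) * f (q.2, p.2)) (μ.prod ν) := by
  obtain ⟨C, hC⟩ := hf.bounded
  have hm := hf.measurable
  refine Integrable.of_bound (C := C * C) ?_ (Eventually.of_forall ?_)
  · refine Measurable.aestronglyMeasurable ?_
    unfold Function.uncurry
    exact (hm.comp (by fun_prop)).mul (hm.comp (by fun_prop))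
  · rintro ⟨p, q⟩
    simp only [Function.uncurry]
    rw [Real.norm_eq_abs, abs_of_nonneg (mul_nonneg (hf.nonneg _) (hf.nonneg _))]
    exact mul_le_mul (hC _) (hC _) (hf.nonneg _) ((hf.nonneg (q.1, p.1)).trans (hC _))

lemma phiFn_nonneg {f : Sq → ℝ} (hf : FairlyDistributed f) (ν : Measure Sq) (p : Sq) :
    0 ≤ phiFn f ν p :=
  integral_nonneg fun _ => mul_nonneg (hf.nonneg _) (hf.nonneg _)

lemma PhiMeas_apply {f : Sq → ℝ} (hf : FairlyDistributed f) (ν : Measure Sq)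
    [IsProbabilityMeasure ν] {A B : Set unitInterval} (hA : MeasurableSet A)
    (hB : MeasurableSet B) :
    PhiMeas f ν (A ×ˢ B) =
      ENNReal.ofReal (∫ q, (∫ u in A, f (q.1, u)) * (∫ v in B, f (q.2, v)) ∂ν) := by
  unfold PhiMeas
  rw [withDensity_apply _ (hA.prod hB)]
  have hi := phiFn_integrable_aux hf ν (volume.restrict (A ×ˢ B))
  have hi2 : Integrable (phiFn f ν) (volume.restrict (A ×ˢ B)) := hi.integral_prod_left
  rw [← ofReal_integral_eq_lintegral_ofReal hi2 (Eventually.of_forall (phiFn_nonneg hf ν))]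
  congr 1
  unfold phiFn
  rw [integral_integral_swap hi]
  refine integral_congr_ae (Eventually.of_forall fun q => ?_)
  exact setIntegral_prod_mul (fun u => f (q.1, u)) (fun v => f (q.2, v)) A B

lemma PhiMeas_real {f : Sq → ℝ} (hf : FairlyDistributed f) (ν : Measure Sq)
    [IsProbabilityMeasure ν] {A B : Set unitInterval} (hA : MeasurableSet A)
    (hB : MeasurableSet B) :
    (PhiMeas f ν).real (A ×ˢ B) =
      ∫ q, (∫ u in A, f (q.1, u)) * (∫ v in B, f (q.2, v)) ∂ν := by
  rw [measureReal_def, PhiMeas_apply hf ν hA hB, ENNReal.toReal_ofReal]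
  exact integral_nonneg fun q => mul_nonneg (integral_nonneg fun _ => hf.nonneg _)
    (integral_nonneg fun _ => hf.nonneg _)

lemma PhiMeas_prob {f : Sq → ℝ} (hf : FairlyDistributed f) (ν : Measure Sq)
    [IsProbabilityMeasure ν] : IsProbabilityMeasure (PhiMeas f ν) := by
  constructor
  rw [← Set.univ_prod_univ, PhiMeas_apply hf ν MeasurableSet.univ MeasurableSet.univ]
  simp [hf.row]

lemma integral_swap_symm {ν : Measure Sq} (hν : IsSymmSq ν) (F : Sq → ℝ) :
    ∫ q, F q.swap ∂ν = ∫ q, F q ∂ν := by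
  have hme : MeasurableEmbedding (Prod.swap : Sq → Sq) :=
    MeasurableEquiv.prodComm.measurableEmbedding
  conv_rhs => rw [← show ν.map Prod.swap = ν from hν]
  rw [hme.integral_map]

lemma PhiMeas_symm (f : Sq → ℝ) {ν : Measure Sq} (hν : IsSymmSq ν) :
    IsSymmSq (PhiMeas f ν) := by
  refine isSymmSq_withDensity _ fun p => ?_
  congr 1
  unfold phiFn
  rw [← integral_swap_symm hν]
  simp only [Prod.fst_swap, Prod.snd_swap, mul_comm]

lemma muM_apply {k : ℕ} (hk : 0 < k) (M : Matrix (Fin k) (Fin k) ℝ) (i j : Fin k) :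
    muM M (gcell k hk i ×ˢ gcell k hk j) = ENNReal.ofReal (M i j) := by
  have hk' : (0:ℝ) < k := by exact_mod_cast hk
  have hms := (measurableSet_gcell k hk i).prod (measurableSet_gcell k hk j)
  unfold muM
  rw [dif_pos hk, withDensity_apply _ hms]
  rw [setLIntegral_congr_fun (g := fun _ => ENNReal.ofReal ((k : ℝ) ^ 2 * M i j)) hms
    (fun p hp => by
      have h1 : gridIdx k hk p.1 = i := hp.1
      have h2 : gridIdx k hk p.2 = j := hp.2
      simp only [h1, h2])]
  rw [setLIntegral_const, Measure.volume_eq_prod, Measure.prod_prod, volume_gcell, volume_gcell,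
    ← ENNReal.ofReal_mul (by positivity), ← ENNReal.ofReal_mul' (by positivity)]
  congr 1
  field_simp

lemma muM_univ {k : ℕ} (hk : 0 < k) (M : Matrix (Fin k) (Fin k) ℝ) :
    muM M Set.univ = ∑ c : Fin k × Fin k, ENNReal.ofReal (M c.1 c.2) := by
  have h : (Set.univ : Set Sq) =
      ⋃ c ∈ (Finset.univ : Finset (Fin k × Fin k)), gmap k hk ⁻¹' {c} := by
    ext p
    simp
  rw [h, measure_biUnion_finset]
  · refine Finset.sum_congr rfl fun c _ => ?_
    rw [← muM_apply hk]
    congr 1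
    ext p
    simp [gmap, gcell, Prod.ext_iff]
  · intro a _ b _ hab
    exact Disjoint.preimage _ (by simpa using hab)
  · intro c _
    exact measurable_gmap k hk (measurableSet_singleton _)

lemma muM_symm {k : ℕ} (hk : 0 < k) (M : Matrix (Fin k) (Fin k) ℝ) (hM : ∀ i j, M i j = M j i) :
    IsSymmSq (muM M) := by
  unfold muM
  rw [dif_pos hk]
  refine isSymmSq_withDensity _ fun p => ?_
  simp only [Prod.fst_swap, Prod.snd_swap]
  rw [hM]

/-! ### Partitions -/

lemma frac_le_one {k : ℕ} {f : Fin k → unitInterval → ℝ} (hf : IsFracPartition k f) (i : Fin k)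
    (x : unitInterval) : f i x ≤ 1 := by
  rw [← hf.2.2.1 x]
  exact Finset.single_le_sum (f := fun j => f j x) (fun j _ => hf.2.1 j x) (Finset.mem_univ i)

lemma sum_density {k : ℕ} {f : Fin k → unitInterval → ℝ} (hf : IsFracPartition k f)
    (ν : Measure Sq) [IsProbabilityMeasure ν] :
    ∑ c : Fin k × Fin k, ∫ p, f c.1 p.1 * f c.2 p.2 ∂ν = 1 := by
  rw [← integral_finsetSum]
  · have : ∀ p : Sq, ∑ c : Fin k × Fin k, f c.1 p.1 * f c.2 p.2 = 1 := by
      intro p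
      rw [Fintype.sum_prod_type]
      simp only [← Finset.mul_sum, hf.2.2.1, mul_one]
    simp [this]
  · intro c _
    have h1 := hf.1 c.1
    have h2 := hf.1 c.2
    refine Integrable.of_bound (C := 1) (Measurable.aestronglyMeasurable (by fun_prop))
      (Eventually.of_forall fun p => ?_)
    rw [Real.norm_eq_abs, abs_of_nonneg (mul_nonneg (hf.2.1 _ _) (hf.2.1 _ _))]
    exact mul_le_one₀ (frac_le_one hf _ _) (hf.2.1 _ _) (frac_le_one hf _ _)

/-- The s-graphon associated with the density matrix of a fractional partition. -/
lemma exists_muM {k : ℕ} (hk : 0 < k) {f : Fin k → unitInterval → ℝ} (hf : IsFracPartition k f)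
    (ν : SGraphon) : ∃ τ : SGraphon, ∃ M : Matrix (Fin k) (Fin k) ℝ,
      (∀ i j, M i j = ∫ p, f i p.1 * f j p.2 ∂ν.toMeasure) ∧ τ.toMeasure = muM M := by
  set M : Matrix (Fin k) (Fin k) ℝ := fun i j => ∫ p, f i p.1 * f j p.2 ∂ν.toMeasure with hM
  have hnn : ∀ i j, 0 ≤ M i j :=
    fun i j => integral_nonneg fun _ => mul_nonneg (hf.2.1 _ _) (hf.2.1 _ _)
  have hsymm : ∀ i j, M i j = M j i := by
    intro i j
    have := integral_swap_symm ν.2 (fun q => f i q.1 * f j q.2)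
    simp only [Prod.fst_swap, Prod.snd_swap] at this
    have h2 : M i j = ∫ q : Sq, f i q.2 * f j q.1 ∂ν.toMeasure := this.symm
    rw [h2]
    simp only [hM, mul_comm]
  have hprob : IsProbabilityMeasure (muM M) := by
    constructor
    rw [muM_univ hk, ← ENNReal.ofReal_sum_of_nonneg (fun c _ => hnn _ _)]
    have := sum_density hf ν.toMeasure
    rw [show ∑ c : Fin k × Fin k, M c.1 c.2 = 1 from this, ENNReal.ofReal_one]
  exact ⟨⟨⟨muM M, hprob⟩, muM_symm hk M hsymm⟩, M, fun _ _ => rfl, rfl⟩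

/-- Averaging a fairly distributed function over the grid gives a fractional partition. -/
lemma isFracPartition_of_fd {k : ℕ} (hk : 0 < k) {f : Sq → ℝ} (hf : FairlyDistributed f) :
    IsFracPartition k (fun i x => ∫ u in gcell k hk i, f (x, u)) := by
  obtain ⟨C, hC⟩ := hf.bounded
  have hbd : ∀ p, ‖f p‖ ≤ C := fun p => by
    rw [Real.norm_eq_abs, abs_of_nonneg (hf.nonneg p)]
    exact hC p
  have hsec : ∀ x, Integrable (fun u => f (x, u)) := fun x =>
    Integrable.of_bound (C := C)
      (hf.measurable.comp (by fun_prop)).aestronglyMeasurable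
      (Eventually.of_forall fun u => hbd _)
  refine ⟨fun i => ?_, fun i x => integral_nonneg fun _ => hf.nonneg _, fun x => ?_, fun i => ?_⟩
  · exact (hf.measurable.stronglyMeasurable.integral_prod_right' (ν := volume.restrict _)).measurable
  · rw [← integral_biUnion_finset]
    · have : (⋃ i ∈ (Finset.univ : Finset (Fin k)), gcell k hk i) = Set.univ := by
        ext u
        simp [gcell]
      rw [this, Measure.restrict_univ, hf.row]
    · exact fun i _ => measurableSet_gcell k hk i
    · intro a _ b _ hab
      exact Disjoint.preimage _ (by simpa using hab)
    · exact fun i _ => (hsec x).integrableOn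
  · rw [integral_integral_swap]
    · simp only [hf.col]
      rw [setIntegral_const, volume_real_gcell]
      simp
    · refine Integrable.of_bound (C := C) hf.measurable.aestronglyMeasurable
        (Eventually.of_forall fun u => hbd _)

/-! ### Approximation by continuous partitions -/

lemma integrable_frac {k : ℕ} {f : Fin k → unitInterval → ℝ} (hf : IsFracPartition k f)
    (m : Measure unitInterval) [IsFiniteMeasure m] (i : Fin k) : Integrable (f i) m :=
  Integrable.of_bound (C := 1) (hf.1 i).aestronglyMeasurable (Eventually.of_forall fun x => by
    rw [Real.norm_eq_abs, abs_of_nonneg (hf.2.1 _ _)]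
    exact frac_le_one hf _ _)

lemma integrable_cont {h : unitInterval → ℝ} (hh : Continuous h)
    (m : Measure unitInterval) [IsFiniteMeasure m] : Integrable h m :=
  (BoundedContinuousFunction.mkOfCompact ⟨h, hh⟩).integrable m

/-- Approximation by a continuous partition of unity, without the integral constraint. -/
lemma approx_step1 {k : ℕ} (hk : 0 < k) {f : Fin k → unitInterval → ℝ}
    (hf : IsFracPartition k f) (m : Measure unitInterval) [IsFiniteMeasure m] (e : ℝ)
    (he : 0 < e) :
    ∃ b : Fin k → unitInterval → ℝ, (∀ i, Continuous (b i)) ∧ (∀ i x, 0 ≤ b i x) ∧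
      (∀ x, ∑ i, b i x = 1) ∧ ∀ i, ∫ x, |f i x - b i x| ∂m ≤ e := by
  have hm0 : 0 ≤ m.real Set.univ := measureReal_nonneg
  set δ := e / ((k + 1) * (1 + m.real Set.univ)) with hδ
  have hδ0 : 0 < δ := by positivity
  choose a ha hai using fun i =>
    (integrable_frac hf m i).exists_boundedContinuous_integral_sub_le hδ0
  set p : Fin k → unitInterval → ℝ := fun i x => max (a i x) 0 + δ with hp
  have hpc : ∀ i, Continuous (p i) := fun i =>
    ((a i).continuous.max continuous_const).add continuous_const
  have hp0 : ∀ i x, 0 < p i x := fun i x => by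
    have := le_max_right (a i x) 0
    simp only [hp]
    linarith
  have hs0 : ∀ x, 0 < ∑ j, p j x := fun x =>
    Finset.sum_pos (fun j _ => hp0 j x) ⟨⟨0, hk⟩, Finset.mem_univ _⟩
  have hfp_int : ∀ i, Integrable (fun x => |f i x - p i x|) m := fun i =>
    ((integrable_frac hf m i).sub (integrable_cont (hpc i) m)).abs
  have hfp : ∀ i, ∫ x, |f i x - p i x| ∂m ≤ δ * (1 + m.real Set.univ) := by
    intro i
    have hint : Integrable (fun x => ‖f i x - a i x‖) m :=
      ((integrable_frac hf m i).sub (hai i)).norm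
    calc ∫ x, |f i x - p i x| ∂m ≤ ∫ x, (‖f i x - a i x‖ + δ) ∂m := by
          refine integral_mono (hfp_int i) (hint.add (integrable_const _)) fun x => ?_
          simp only [hp, Real.norm_eq_abs]
          have h0 := hf.2.1 i x
          have h1 : |f i x - max (a i x) 0| ≤ |f i x - a i x| := by
            have := abs_max_sub_max_le_abs (f i x) (a i x) 0
            rwa [max_eq_left h0] at this
          rw [abs_le] at *
          constructor <;> linarith [h1.1, h1.2]
      _ = (∫ x, ‖f i x - a i x‖ ∂m) + m.real Set.univ * δ := by
          rw [integral_add hint (integrable_const _)]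
          simp
      _ ≤ δ * (1 + m.real Set.univ) := by linarith [ha i]
  have hbc : ∀ i, Continuous fun x => p i x / ∑ j, p j x := fun i =>
    (hpc i).div (continuous_finsetSum _ fun j _ => hpc j) fun x => (hs0 x).ne'
  refine ⟨fun i x => p i x / ∑ j, p j x, hbc,
    fun i x => div_nonneg (hp0 i x).le (hs0 x).le, fun x => ?_, fun i => ?_⟩
  · rw [← Finset.sum_div, div_self (hs0 x).ne']
  · have hsumint : Integrable (fun x => ∑ j, |f j x - p j x|) m :=
      integrable_finsetSum _ fun j _ => hfp_int j
    calc ∫ x, |f i x - p i x / ∑ j, p j x| ∂m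
        ≤ ∫ x, (|f i x - p i x| + ∑ j, |f j x - p j x|) ∂m := by
          refine integral_mono
            (((integrable_frac hf m i).sub (integrable_cont (hbc i) m)).abs)
            ((hfp_int i).add hsumint) fun x => ?_
          have h1 : |p i x - p i x / ∑ j, p j x| ≤ ∑ j, |f j x - p j x| := by
            have hle : p i x ≤ ∑ j, p j x :=
              Finset.single_le_sum (f := fun j => p j x) (fun j _ => (hp0 j x).le)
                (Finset.mem_univ i)
            have hq : p i x / ∑ j, p j x ≤ 1 := (div_le_one (hs0 x)).mpr hle
            have hq0 : 0 ≤ p i x / ∑ j, p j x := div_nonneg (hp0 i x).le (hs0 x).le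
            have heq : p i x - p i x / ∑ j, p j x =
                - (p i x / ∑ j, p j x) * ∑ j, (f j x - p j x) := by
              rw [Finset.sum_sub_distrib, hf.2.2.1 x]
              have := (hs0 x).ne'
              field_simp
              ring
            rw [heq, abs_mul, abs_neg, abs_of_nonneg hq0]
            calc _ ≤ 1 * |∑ j, (f j x - p j x)| :=
                  mul_le_mul_of_nonneg_right hq (abs_nonneg _)
              _ ≤ _ := by
                  rw [one_mul]
                  exact Finset.abs_sum_le_sum_abs _ _
          have h2 := abs_add_le (f i x - p i x) (p i x - p i x / ∑ j, p j x)
          rw [sub_add_sub_cancel] at h2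
          linarith
      _ = (∫ x, |f i x - p i x| ∂m) + ∑ j, ∫ x, |f j x - p j x| ∂m := by
          rw [integral_add (hfp_int i) hsumint, integral_finsetSum _ fun j _ => hfp_int j]
      _ ≤ δ * (1 + m.real Set.univ) + ∑ j : Fin k, δ * (1 + m.real Set.univ) :=
          add_le_add (hfp i) (Finset.sum_le_sum fun j _ => hfp j)
      _ = e := by
          simp only [Finset.sum_const, Finset.card_univ, Fintype.card_fin, nsmul_eq_mul, hδ]
          field_simp
          ring

lemma approx_partition {k : ℕ} (hk : 0 < k) {f : Fin k → unitInterval → ℝ}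
    (hf : IsFracPartition k f) (m : Measure unitInterval) [IsFiniteMeasure m]
    (hm : volume ≤ m) (η : ℝ) (hη : 0 < η) :
    ∃ c : Fin k → unitInterval → ℝ, IsFracPartition k c ∧ (∀ i, Continuous (c i)) ∧
      ∀ i, ∫ x, |f i x - c i x| ∂m ≤ η := by
  have hk' : (0:ℝ) < k := by exact_mod_cast hk
  have hm0 : 0 ≤ m.real Set.univ := measureReal_nonneg
  set e := min (1 / (k:ℝ)) (η / (1 + (k + 1) * m.real Set.univ)) with he
  have he0 : 0 < e := lt_min (by positivity) (by positivity)
  have he1 : k * e ≤ 1 := by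
    have := min_le_left (1 / (k:ℝ)) (η / (1 + (k + 1) * m.real Set.univ))
    rw [← he, le_div_iff₀ hk'] at this
    linarith
  have he2 : e * (1 + (k + 1) * m.real Set.univ) ≤ η := by
    have := min_le_right (1 / (k:ℝ)) (η / (1 + (k + 1) * m.real Set.univ))
    rwa [← he, le_div_iff₀ (by positivity)] at this
  obtain ⟨b, hbc, hb0, hb1, hb⟩ := approx_step1 hk hf m e he0
  have hbl : ∀ i x, b i x ≤ 1 := fun i x => by
    rw [← hb1 x]
    exact Finset.single_le_sum (f := fun j => b j x) (fun j _ => hb0 j x) (Finset.mem_univ i)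
  set B : Fin k → ℝ := fun i => ∫ x, b i x with hB
  have hbint : ∀ i, Integrable (b i) := fun i => integrable_cont (hbc i) _
  have hB0 : ∀ i, 0 ≤ B i := fun i => integral_nonneg (hb0 i)
  have hBsum : ∑ i, B i = 1 := by
    simp only [hB]
    rw [← integral_finsetSum _ fun j _ => hbint j]
    simp [hb1]
  have hBl : ∀ i, B i ≤ 1 := fun i => by
    rw [← hBsum]
    exact Finset.single_le_sum (fun j _ => hB0 j) (Finset.mem_univ i)
  have hBe : ∀ i, |1 / (k:ℝ) - B i| ≤ e := by
    intro i
    rw [← hf.2.2.2 i, hB]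
    simp only
    rw [← integral_sub (integrable_frac hf _ i) (hbint i)]
    refine (abs_integral_le_integral_abs).trans (le_trans ?_ (hb i))
    exact integral_mono_measure hm (Eventually.of_forall fun x => abs_nonneg _)
      ((integrable_frac hf m i).sub (integrable_cont (hbc i) m)).abs
  set t := (k:ℝ) * e with ht
  have ht0 : 0 < t := by positivity
  set c : Fin k → unitInterval → ℝ := fun i x => (1 - t) * b i x + (1 / k - (1 - t) * B i) with hc
  have hcc : ∀ i, Continuous (c i) := fun i =>
    (continuous_const.mul (hbc i)).add continuous_const
  refine ⟨c, ⟨fun i => (hcc i).measurable, fun i x => ?_, fun x => ?_, fun i => ?_⟩, hcc,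
    fun i => ?_⟩
  · have h1 : (1 - t) * B i ≤ 1 / k := by
      have h2 : B i ≤ 1 / k + e := by linarith [(abs_le.mp (hBe i)).1]
      calc (1 - t) * B i ≤ (1 - t) * (1 / k + e) :=
            mul_le_mul_of_nonneg_left h2 (by linarith)
        _ = 1 / k - k * e ^ 2 := by
            rw [ht]
            field_simp
            ring
        _ ≤ 1 / k := by
            have : 0 ≤ k * e ^ 2 := by positivity
            linarith
    have h3 := mul_nonneg (sub_nonneg.mpr he1) (hb0 i x)
    simp only [hc]
    linarith
  · simp only [hc]
    rw [Finset.sum_add_distrib, ← Finset.mul_sum, hb1, Finset.sum_sub_distrib, ← Finset.mul_sum,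
      hBsum]
    simp only [Finset.sum_const, Finset.card_univ, Fintype.card_fin, nsmul_eq_mul]
    field_simp
    ring
  · simp only [hc]
    rw [integral_add ((hbint i).const_mul _) (integrable_const _), integral_const_mul]
    simp [hB]
  · have hdiff : ∀ x, |b i x - c i x| ≤ t + e := by
      intro x
      have h1 := abs_le.mp (hBe i)
      have h2 := hb0 i x
      have h3 := hbl i x
      have h4 := hB0 i
      have h5 := hBl i
      simp only [hc]
      rw [abs_le]
      constructor <;> nlinarith
    have hi1 := ((integrable_frac hf m i).sub (integrable_cont (hbc i) m)).abs
    calc ∫ x, |f i x - c i x| ∂m ≤ ∫ x, (|f i x - b i x| + (t + e)) ∂m := by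
          refine integral_mono ((integrable_frac hf m i).sub (integrable_cont (hcc i) m)).abs
            (hi1.add (integrable_const _)) fun x => ?_
          have h2 := abs_add_le (f i x - b i x) (b i x - c i x)
          rw [sub_add_sub_cancel] at h2
          linarith [hdiff x]
      _ = (∫ x, |f i x - b i x| ∂m) + m.real Set.univ * (t + e) := by
          refine (integral_add hi1 (integrable_const _)).trans ?_
          simp
      _ ≤ e + m.real Set.univ * (t + e) := by linarith [hb i]
      _ = e * (1 + (k + 1) * m.real Set.univ) := by
          rw [ht]
          ring
      _ ≤ η := he2

/-- Indicators of the grid cells. -/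
lemma isFracPartition_indicator {k : ℕ} (hk : 0 < k) :
    IsFracPartition k (fun i => (gcell k hk i).indicator fun _ => (1:ℝ)) := by
  refine ⟨fun i => measurable_const.indicator (measurableSet_gcell k hk i), fun i x =>
    Set.indicator_nonneg (fun _ _ => zero_le_one) _, fun x => ?_, fun i => ?_⟩
  · rw [Finset.sum_eq_single (gridIdx k hk x)]
    · exact Set.indicator_of_mem (by simp [gcell]) _
    · intro b _ hb
      have hx : x ∉ gcell k hk b := fun hx => hb (Eq.symm hx)
      simp only [Set.indicator_of_notMem hx]
    · simp
  · rw [integral_indicator (measurableSet_gcell k hk i), setIntegral_const, volume_real_gcell]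
    simp

lemma exists_fd_approx {k : ℕ} (hk : 0 < k) {f : Fin k → unitInterval → ℝ}
    (hf : IsFracPartition k f) (ν : Measure Sq) [IsProbabilityMeasure ν] (η : ℝ) (hη : 0 < η) :
    ∃ g : Sq → ℝ, FairlyDistributed g ∧ Continuous g ∧ ∀ i j,
      |(PhiMeas g ν).real (gcell k hk i ×ˢ gcell k hk j) - ∫ p, f i p.1 * f j p.2 ∂ν| ≤ η := by
  have hk' : (0:ℝ) < k := by exact_mod_cast hk
  set m : Measure unitInterval := volume + (ν.map Prod.fst + ν.map Prod.snd) with hm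
  have hfin : IsFiniteMeasure m := inferInstance
  obtain ⟨c, hc, hcc, hcf⟩ := approx_partition hk hf m (Measure.le_add_right le_rfl) (η / 4)
    (by positivity)
  obtain ⟨h, hh, hhc, hhf⟩ := approx_partition hk (isFracPartition_indicator hk) volume le_rfl
    (η / (4 * k)) (by positivity)
  set g : Sq → ℝ := fun p => k * ∑ i, c i p.1 * h i p.2 with hg
  have hgc : Continuous g := by
    have h1 : ∀ i, Continuous fun p : Sq => c i p.1 * h i p.2 := fun i =>
      ((hcc i).comp continuous_fst).mul ((hhc i).comp continuous_snd)
    exact continuous_const.mul (continuous_finsetSum _ fun i _ => h1 i)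
  have hgset : ∀ (A : Set unitInterval) (x : unitInterval),
      ∫ u in A, g (x, u) = k * ∑ i, c i x * ∫ u in A, h i u := by
    intro A x
    simp only [hg]
    rw [integral_const_mul, integral_finsetSum]
    · simp only [integral_const_mul]
    · exact fun i _ => (integrable_cont (hhc i) _).const_mul _
  have hgfd : FairlyDistributed g := by
    refine ⟨hgc.measurable, fun p => ?_, ?_, fun x => ?_, fun y => ?_⟩
    · exact mul_nonneg hk'.le (Finset.sum_nonneg fun i _ => mul_nonneg (hc.2.1 _ _) (hh.2.1 _ _))
    · obtain ⟨C, hC⟩ := (isCompact_range hgc).bddAbove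
      exact ⟨C, fun p => hC (Set.mem_range_self p)⟩
    · have := hgset Set.univ x
      simp only [Measure.restrict_univ, hh.2.2.2] at this
      rw [this, ← Finset.sum_mul, hc.2.2.1]
      field_simp
    · simp only [hg]
      rw [integral_const_mul, integral_finsetSum]
      · simp only [integral_mul_const, hc.2.2.2]
        rw [← Finset.mul_sum, hh.2.2.1]
        field_simp
      · exact fun i _ => (integrable_cont (hcc i) _).mul_const _
  refine ⟨g, hgfd, hgc, fun i j => ?_⟩
  rw [PhiMeas_real hgfd ν (measurableSet_gcell k hk i) (measurableSet_gcell k hk j)]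
  set H : Fin k → unitInterval → ℝ := fun a x => ∫ u in gcell k hk a, g (x, u) with hH
  have hHp : IsFracPartition k H := isFracPartition_of_fd hk hgfd
  -- `H a` is uniformly close to `c a`
  have hHc : ∀ a x, |c a x - H a x| ≤ η / 4 := by
    intro a x
    have h1 : ∀ i, |(∫ u in gcell k hk a, (gcell k hk i).indicator (fun _ => (1:ℝ)) u)
        - ∫ u in gcell k hk a, h i u| ≤ η / (4 * k) := by
      intro i
      have hI1 := integrable_frac (isFracPartition_indicator hk) volume i
      have hI2 := integrable_cont (hhc i) volume
      rw [← integral_sub hI1.integrableOn hI2.integrableOn]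
      refine (abs_integral_le_integral_abs).trans (le_trans ?_ (hhf i))
      exact integral_mono_measure Measure.restrict_le_self
        (Eventually.of_forall fun x => abs_nonneg _) (hI1.sub hI2).abs
    have h2 : c a x = k * ∑ i, c i x *
        ∫ u in gcell k hk a, (gcell k hk i).indicator (fun _ => (1:ℝ)) u := by
      have : ∀ i, ∫ u in gcell k hk a, (gcell k hk i).indicator (fun _ => (1:ℝ)) u =
          if i = a then 1 / (k:ℝ) else 0 := by
        intro i
        rw [setIntegral_indicator (measurableSet_gcell k hk i)]
        split_ifs with hia
        · rw [hia, Set.inter_self, setIntegral_const, volume_real_gcell]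
          simp
        · have : gcell k hk a ∩ gcell k hk i = ∅ := by
            ext u
            simp only [gcell, Set.mem_inter_iff, Set.mem_preimage, Set.mem_singleton_iff,
              Set.mem_empty_iff_false, iff_false, not_and]
            intro h1 h2
            exact hia (h2.symm.trans h1)
          rw [this]
          simp
      simp only [this, mul_ite, mul_zero, Finset.sum_ite_eq', Finset.mem_univ, if_true]
      field_simp
    rw [h2, hH]
    simp only
    rw [hgset, ← mul_sub, ← Finset.sum_sub_distrib, abs_mul, abs_of_pos hk']
    calc _ ≤ (k:ℝ) * ∑ i, c i x * (η / (4 * k)) := by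
          refine mul_le_mul_of_nonneg_left ?_ hk'.le
          refine (Finset.abs_sum_le_sum_abs _ _).trans (Finset.sum_le_sum fun i _ => ?_)
          rw [← mul_sub, abs_mul, abs_of_nonneg (hc.2.1 i x)]
          exact mul_le_mul_of_nonneg_left (h1 i) (hc.2.1 i x)
      _ = η / 4 := by
          rw [← Finset.sum_mul, hc.2.2.1]
          field_simp
  -- marginals
  have hmarg : ∀ (a : Fin k) (π : Sq → unitInterval), Measurable π → ν.map π ≤ m →
      ∫ q, |f a (π q) - H a (π q)| ∂ν ≤ η / 2 := by
    intro a π hπ hle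
    have hmeas : Measurable fun x => |f a x - c a x| := by
      have h1 := hf.1 a
      have h2 := hc.1 a
      fun_prop
    have hI : Integrable (fun x => |f a x - c a x|) m :=
      ((integrable_frac hf m a).sub (integrable_frac hc m a)).abs
    have hI2 : Integrable (fun x => |f a x - c a x|) (ν.map π) := hI.mono_measure hle
    have hI3 : Integrable (fun q => |f a (π q) - c a (π q)|) ν :=
      hI2.comp_measurable hπ
    have hpr : IsProbabilityMeasure (ν.map π) := Measure.isProbabilityMeasure_map hπ.aemeasurable
    have hI4 : Integrable (fun q => |f a (π q) - H a (π q)|) ν :=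
      Integrable.comp_measurable (g := fun x => |f a x - H a x|)
        ((integrable_frac hf _ a).sub (integrable_frac hHp _ a)).abs hπ
    calc ∫ q, |f a (π q) - H a (π q)| ∂ν ≤ ∫ q, (|f a (π q) - c a (π q)| + η / 4) ∂ν := by
          refine integral_mono hI4 (hI3.add (integrable_const _)) fun q => ?_
          have h2 := abs_add_le (f a (π q) - c a (π q)) (c a (π q) - H a (π q))
          rw [sub_add_sub_cancel] at h2
          linarith [hHc a (π q)]
      _ = (∫ q, |f a (π q) - c a (π q)| ∂ν) + η / 4 := by
          refine (integral_add hI3 (integrable_const _)).trans ?_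
          simp
      _ = (∫ x, |f a x - c a x| ∂(ν.map π)) + η / 4 := by
          rw [integral_map hπ.aemeasurable hmeas.aestronglyMeasurable]
      _ ≤ (∫ x, |f a x - c a x| ∂m) + η / 4 := by
          have := integral_mono_measure hle (Eventually.of_forall fun x => abs_nonneg _) hI
          linarith
      _ ≤ η / 2 := by linarith [hcf a]
  have hle1 : ν.map Prod.fst ≤ m :=
    Measure.le_add_left (Measure.le_add_right le_rfl)
  have hle2 : ν.map Prod.snd ≤ m :=
    Measure.le_add_left (Measure.le_add_left le_rfl)
  have hprodint : ∀ {F : Fin k → unitInterval → ℝ}, IsFracPartition k F →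
      Integrable (fun p : Sq => F i p.1 * F j p.2) ν := by
    intro F hF
    have h1 := hF.1 i
    have h2 := hF.1 j
    refine Integrable.of_bound (C := 1) (Measurable.aestronglyMeasurable (by fun_prop))
      (Eventually.of_forall fun p => ?_)
    rw [Real.norm_eq_abs, abs_of_nonneg (mul_nonneg (hF.2.1 _ _) (hF.2.1 _ _))]
    exact mul_le_one₀ (frac_le_one hF _ _) (hF.2.1 _ _) (frac_le_one hF _ _)
  have hdint : ∀ (a : Fin k) (π : Sq → unitInterval), Measurable π →
      Integrable (fun q => |f a (π q) - H a (π q)|) ν := by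
    intro a π hπ
    have hpr : IsProbabilityMeasure (ν.map π) := Measure.isProbabilityMeasure_map hπ.aemeasurable
    exact Integrable.comp_measurable (g := fun x => |f a x - H a x|)
        ((integrable_frac hf _ a).sub (integrable_frac hHp _ a)).abs hπ
  change |(∫ q, H i q.1 * H j q.2 ∂ν) - ∫ p, f i p.1 * f j p.2 ∂ν| ≤ η
  rw [← integral_sub (hprodint hHp) (hprodint hf)]
  refine (abs_integral_le_integral_abs).trans ?_
  have hD1 := hdint i Prod.fst measurable_fst
  have hD2 := hdint j Prod.snd measurable_snd
  calc ∫ q, |H i q.1 * H j q.2 - f i q.1 * f j q.2| ∂ν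
      ≤ ∫ q, (|f i q.1 - H i q.1| + |f j q.2 - H j q.2|) ∂ν := by
        refine integral_mono ((hprodint hHp).sub (hprodint hf)).abs (hD1.add hD2) fun q => ?_
        have heq : H i q.1 * H j q.2 - f i q.1 * f j q.2 =
            -((f i q.1 - H i q.1) * H j q.2 + f i q.1 * (f j q.2 - H j q.2)) := by ring
        simp only
        rw [heq, abs_neg]
        refine (abs_add_le _ _).trans (add_le_add ?_ ?_)
        · rw [abs_mul, abs_of_nonneg (hHp.2.1 _ _)]
          exact mul_le_of_le_one_right (abs_nonneg _) (frac_le_one hHp _ _)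
        · rw [abs_mul, abs_of_nonneg (hf.2.1 _ _)]
          exact mul_le_of_le_one_left (abs_nonneg _) (frac_le_one hf _ _)
    _ = (∫ q, |f i q.1 - H i q.1| ∂ν) + ∫ q, |f j q.2 - H j q.2| ∂ν := integral_add hD1 hD2
    _ ≤ η := by
        linarith [hmarg i Prod.fst measurable_fst hle1, hmarg j Prod.snd measurable_snd hle2]

/-- Lemma `lem:regularity`, the regularity lemma. Let `ρ` be an arbitrary
metric on the space of s-graphons compatible with the weak topology. Then for every `ε > 0`
there is `K ∈ ℕ` such that for every s-graphon `ν`, the Hausdorff distance (induced by `ρ`)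
between `C(ν)` and `C̃(ν,K)` is at most `ε`. -/
theorem stmt4 (m : MetricSpace SGraphon)
    (hcompat : m.toUniformSpace.toTopologicalSpace =
      (inferInstance : TopologicalSpace SGraphon)) :
    ∀ ε : ℝ, 0 < ε → ∃ K : ℕ, 0 < K ∧ ∀ ν : SGraphon,
      @Metric.hausdorffDist SGraphon m.toPseudoMetricSpace
        (shape ν) (kShapeTilde ν.toMeasure K) ≤ ε := by
  intro ε hε
  obtain ⟨K, hK, hgrid⟩ := exists_grid m hcompat (ε / 2) (by positivity)
  have hK' : (0:ℝ) < K := by exact_mod_cast hK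
  refine ⟨K, hK, fun ν => ?_⟩
  refine Metric.hausdorffDist_le_of_mem_dist hε.le ?_ ?_
  · intro x hx
    have hx' : x ∈ @closure SGraphon m.toUniformSpace.toTopologicalSpace
        {σ : SGraphon | ∃ f : Sq → ℝ, FairlyDistributed f ∧ Continuous f ∧
          σ.toMeasure = PhiMeas f ν.toMeasure} := by
      rw [hcompat]
      exact hx
    obtain ⟨σ, ⟨f, hf, hfc, hσ⟩, hdist⟩ := Metric.mem_closure_iff.mp hx' (ε / 2) (by positivity)
    have hpart := isFracPartition_of_fd hK hf
    obtain ⟨τ, M, hM, hτ⟩ := exists_muM hK hpart ν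
    refine ⟨τ, ⟨M, subset_closure ⟨_, hpart, hM⟩, hτ⟩, ?_⟩
    have h2 : dist σ τ ≤ ε / 2 := by
      apply hgrid
      intro i j
      rw [hσ, hτ, PhiMeas_real hf _ (measurableSet_gcell K hK i) (measurableSet_gcell K hK j),
        measureReal_def, muM_apply, ENNReal.toReal_ofReal, hM, sub_self, abs_zero]
      · positivity
      · rw [hM]
        exact integral_nonneg fun _ => mul_nonneg (hpart.2.1 _ _) (hpart.2.1 _ _)
    linarith [dist_triangle x σ τ]
  · rintro τ ⟨M, hM, hτ⟩
    set δ : ℝ := 1 / (K : ℝ) ^ 3 / 2 with hδ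
    have hδ0 : 0 < δ := by positivity
    obtain ⟨N, hNM, f, hf, hN⟩ : ∃ N : Matrix (Fin K) (Fin K) ℝ, (∀ i j, |M i j - N i j| < δ) ∧
        ∃ f : Fin K → unitInterval → ℝ, IsFracPartition K f ∧
          ∀ i j, N i j = ∫ p, f i p.1 * f j p.2 ∂ν.toMeasure := by
      have hopen : IsOpen {N : Matrix (Fin K) (Fin K) ℝ | ∀ i j, |M i j - N i j| < δ} := by
        simp only [Set.ofPred_forall]
        refine isOpen_iInter_of_finite fun i => isOpen_iInter_of_finite fun j => ?_
        exact isOpen_lt (continuous_const.sub (continuous_id.matrix_elem i j)).abs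
          continuous_const
      obtain ⟨N, h1, h2⟩ := mem_closure_iff.mp hM _ hopen (fun i j => by simpa using hδ0)
      exact ⟨N, h1, h2⟩
    obtain ⟨g, hg, hgc, hgN⟩ := exists_fd_approx hK hf ν.toMeasure δ hδ0
    have hprob := PhiMeas_prob hg ν.toMeasure
    let σ : SGraphon := ⟨⟨PhiMeas g ν.toMeasure, hprob⟩, PhiMeas_symm g ν.2⟩
    have hσ : σ.toMeasure = PhiMeas g ν.toMeasure := rfl
    refine ⟨σ, subset_closure ⟨g, hg, hgc, hσ⟩, ?_⟩
    have h2 : dist τ σ ≤ ε / 2 := by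
      apply hgrid
      intro i j
      rw [hσ, hτ, measureReal_def, muM_apply, ENNReal.toReal_ofReal']
      have h1 := hgN i j
      rw [← hN i j] at h1
      have hN0 : 0 ≤ N i j := by
        rw [hN]
        exact integral_nonneg fun _ => mul_nonneg (hf.2.1 _ _) (hf.2.1 _ _)
      have h3 : |max (M i j) 0 - N i j| ≤ |M i j - N i j| := by
        have := abs_max_sub_max_le_abs (M i j) (N i j) 0
        rwa [max_eq_left hN0] at this
      have h4 := hNM i j
      have h5 := abs_le.mp h1
      have h6 := abs_le.mp (h3.trans h4.le)
      rw [abs_le]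
      constructor <;> linarith [h5.1, h5.2, h6.1, h6.2]
    linarith

end
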